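/- For all f₁, f₂ ∈ C_c^∞((0,∞)) (complex-valued), ∫₀^∞∫₀^∞ (t+s)^{-1} f₁(s) conj(f₂(t)) ds dt = ∫_ℝ (π / cosh(πξ)) (M f₁)(ξ) conj((M f₂)(ξ)) dξ, where (M f)(ξ) = (2π)^{-1/2} ∫₀^∞ f(t) t^{-1/2 - iξ} dt is the Mellin transform. (This diagonalizes the quadratic form of the Carleman operator, the Hankel operator with kernel h(t) = t^{-1}.) -/

import Mathlib

open MeasureTheory
open scoped ComplexOrder

noncomputable section

/-- Complex-valued test functions: smooth, compactly supported, support inside `(0,∞)`. -/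
def IsTestFun (f : ℝ → ℂ) : Prop :=
  ContDiff ℝ (⊤ : ℕ∞) f ∧ HasCompactSupport f ∧ tsupport f ⊆ Set.Ioi 0

/-- The Mellin transform `(M f)(ξ) = (2π)^{-1/2} ∫₀^∞ f(t) t^{-1/2 - iξ} dt`. -/
def mellinT (f : ℝ → ℂ) (ξ : ℝ) : ℂ :=
  (Real.sqrt (2 * Real.pi) : ℂ)⁻¹ *
    ∫ t in Set.Ioi (0:ℝ), f t * (t : ℂ) ^ ((-(1/2) : ℂ) - Complex.I * ξ)

/-- The integrand of the Beta integral `B(1/2 + iη, 1/2 - iη)`, pulled back along the sigmoid. -/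
theorem sigmoid_deriv_smul_beta_integrand (η y : ℝ) :
    |Real.sigmoid y * (1 - Real.sigmoid y)| •
      ((Real.sigmoid y : ℂ) ^ ((1 / 2 + η * Complex.I : ℂ) - 1) *
        (1 - (Real.sigmoid y : ℂ)) ^ ((1 / 2 - η * Complex.I : ℂ) - 1)) =
      Complex.exp (η * y * Complex.I) * ((2 * Real.cosh (y / 2))⁻¹ : ℝ) := by
  have hp := Real.sigmoid_pos y
  have hq : 0 < 1 - Real.sigmoid y := sub_pos.2 (Real.sigmoid_lt_one y)
  have hlog : Real.log (Real.sigmoid y) = y + Real.log (1 - Real.sigmoid y) := by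
    rw [← Real.sigmoid_neg, ← Real.sigmoid_mul_rexp_neg, Real.log_mul hp.ne' (Real.exp_ne_zero _),
      Real.log_exp]
    ring
  have hcosh : (2 * Real.cosh (y / 2))⁻¹ = Real.exp (y / 2) * (1 - Real.sigmoid y) := by
    rw [← Real.sigmoid_neg, Real.sigmoid_def, neg_neg, Real.cosh_eq, ← div_eq_mul_inv,
      inv_eq_one_div, div_eq_div_iff (by positivity) (by positivity)]
    have h1 : Real.exp y = Real.exp (y / 2) * Real.exp (y / 2) := by
      rw [← Real.exp_add]; ring_nf
    have h2 : Real.exp (y / 2) * Real.exp (-(y / 2)) = 1 := by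
      rw [← Real.exp_add]; simp
    rw [h1]
    linear_combination -h2
  rw [hcosh, abs_of_pos (mul_pos hp hq), Complex.real_smul]
  have hq' : (1 - (Real.sigmoid y : ℂ)) = ((1 - Real.sigmoid y : ℝ) : ℂ) := by push_cast; rfl
  rw [hq', Complex.cpow_def_of_ne_zero (by exact_mod_cast hp.ne'),
    Complex.cpow_def_of_ne_zero (by exact_mod_cast hq.ne'), ← Complex.ofReal_log hp.le,
    ← Complex.ofReal_log hq.le]
  nth_rewrite 1 [← Real.exp_log hp]
  nth_rewrite 1 [← Real.exp_log hq]
  nth_rewrite 3 [← Real.exp_log hq]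
  rw [hlog]
  push_cast
  simp only [← Complex.exp_add]
  congr 1
  ring

theorem Real.sigmoid_image_univ : Real.sigmoid '' Set.univ = Set.Ioo 0 1 := by
  rw [Set.image_univ, Real.range_sigmoid]

theorem integrable_inv_two_mul_cosh_half :
    Integrable fun y : ℝ => (2 * Real.cosh (y / 2))⁻¹ := by
  have h := Complex.betaIntegral_convergent (u := 1 / 2 + (0 : ℝ) * Complex.I)
    (v := 1 / 2 - (0 : ℝ) * Complex.I) (by simp) (by simp)
  rw [intervalIntegrable_iff_integrableOn_Ioo_of_le zero_le_one, ← Real.sigmoid_image_univ,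
    integrableOn_image_iff_integrableOn_abs_deriv_smul MeasurableSet.univ
      (fun y _ => (Real.hasDerivAt_sigmoid y).hasDerivWithinAt) Real.sigmoid_injective.injOn,
    integrableOn_univ] at h
  simp only [sigmoid_deriv_smul_beta_integrand] at h
  have hre : Integrable fun y : ℝ => (((2 * Real.cosh (y / 2))⁻¹ : ℝ) : ℂ) := by
    simpa only [Complex.ofReal_zero, zero_mul, Complex.exp_zero, one_mul] using h
  exact hre.re

theorem integral_exp_mul_inv_two_mul_cosh_half (η : ℝ) :
    ∫ y : ℝ, Complex.exp (η * y * Complex.I) * ((2 * Real.cosh (y / 2))⁻¹ : ℝ) =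
      ((Real.pi / Real.cosh (Real.pi * η) : ℝ) : ℂ) := by
  have hbeta := Complex.Gamma_mul_Gamma_eq_betaIntegral (s := 1 / 2 + η * Complex.I)
    (t := 1 / 2 - η * Complex.I) (by simp) (by simp)
  rw [Complex.betaIntegral, intervalIntegral.integral_of_le zero_le_one, integral_Ioc_eq_integral_Ioo,
    ← Real.sigmoid_image_univ,
    integral_image_eq_integral_abs_deriv_smul MeasurableSet.univ
      (fun y _ => (Real.hasDerivAt_sigmoid y).hasDerivWithinAt) Real.sigmoid_injective.injOn,
    setIntegral_univ] at hbeta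
  simp only [sigmoid_deriv_smul_beta_integrand] at hbeta
  have hsum : (1 / 2 + η * Complex.I : ℂ) + (1 / 2 - η * Complex.I) = 1 := by ring
  have hsub : (1 / 2 - η * Complex.I : ℂ) = 1 - (1 / 2 + η * Complex.I) := by ring
  rw [hsum, Complex.Gamma_one, one_mul, hsub, Complex.Gamma_mul_Gamma_one_sub] at hbeta
  rw [← hbeta]
  have hsin : Complex.sin (Real.pi * (1 / 2 + η * Complex.I)) = Complex.cosh (Real.pi * η) := by
    rw [← Complex.cos_mul_I, ← Complex.sin_add_pi_div_two, add_comm]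
    congr 1
    ring
  rw [hsin]
  push_cast
  rfl

theorem integrable_pi_div_cosh :
    Integrable fun ξ : ℝ => Real.pi / Real.cosh (Real.pi * ξ) := by
  have h := (integrable_inv_two_mul_cosh_half.comp_mul_left'
    (R := 2 * Real.pi) (by positivity)).const_mul (2 * Real.pi)
  refine h.congr (ae_of_all _ fun ξ => ?_)
  have hc := Real.cosh_pos (Real.pi * ξ)
  have hx : 2 * Real.pi * ξ / 2 = Real.pi * ξ := by ring
  simp only [hx]
  field_simp

/-- The hyperbolic secant is its own Fourier transform. -/
theorem integral_pi_div_cosh_mul_exp (x : ℝ) :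
    ∫ ξ : ℝ, ((Real.pi / Real.cosh (Real.pi * ξ) : ℝ) : ℂ) * Complex.exp (x * ξ * Complex.I) =
      ((Real.pi / Real.cosh (x / 2) : ℝ) : ℂ) := by
  have hπ := Real.pi_pos
  have h := Measure.integral_comp_mul_left (fun y : ℝ =>
    Complex.exp ((x / (2 * Real.pi) : ℝ) * y * Complex.I) * ((2 * Real.cosh (y / 2))⁻¹ : ℝ))
    (2 * Real.pi)
  rw [integral_exp_mul_inv_two_mul_cosh_half] at h
  have hx : Real.pi * (x / (2 * Real.pi)) = x / 2 := by field_simp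
  rw [hx, abs_of_pos (by positivity), Complex.real_smul] at h
  have key : ∀ ξ : ℝ, ((Real.pi / Real.cosh (Real.pi * ξ) : ℝ) : ℂ) *
      Complex.exp (x * ξ * Complex.I) = (2 * Real.pi : ℝ) *
        (Complex.exp ((x / (2 * Real.pi) : ℝ) * (2 * Real.pi * ξ : ℝ) * Complex.I) *
          ((2 * Real.cosh (2 * Real.pi * ξ / 2))⁻¹ : ℝ)) := by
    intro ξ
    have h1 : 2 * Real.pi * ξ / 2 = Real.pi * ξ := by ring
    have h2 : ((x / (2 * Real.pi) : ℝ) : ℂ) * (2 * Real.pi * ξ : ℝ) = x * ξ := by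
      norm_cast
      field_simp
    have h3 : Real.pi / Real.cosh (Real.pi * ξ) =
        2 * Real.pi * (2 * Real.cosh (Real.pi * ξ))⁻¹ := by
      have := Real.cosh_pos (Real.pi * ξ)
      field_simp
    rw [h1, h2, h3]
    push_cast
    ring
  simp only [key]
  rw [integral_const_mul, h, ← mul_assoc, ← Complex.ofReal_mul,
    mul_inv_cancel₀ (by positivity), Complex.ofReal_one, one_mul]

/-- The Carleman kernel as a superposition of Mellin characters. -/
theorem integral_pi_div_cosh_mul_cpow {s t : ℝ} (hs : 0 < s) (ht : 0 < t) :
    ∫ ξ : ℝ, ((Real.pi / Real.cosh (Real.pi * ξ) : ℝ) : ℂ) *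
        ((s : ℂ) ^ ((-(1 / 2) : ℂ) - Complex.I * ξ) *
          (starRingEnd ℂ) ((t : ℂ) ^ ((-(1 / 2) : ℂ) - Complex.I * ξ))) =
      ((2 * Real.pi * (t + s)⁻¹ : ℝ) : ℂ) := by
  have hcpow : ∀ ξ : ℝ, (s : ℂ) ^ ((-(1 / 2) : ℂ) - Complex.I * ξ) *
      (starRingEnd ℂ) ((t : ℂ) ^ ((-(1 / 2) : ℂ) - Complex.I * ξ)) =
      (Real.exp (-((Real.log s + Real.log t) / 2)) : ℝ) *
        Complex.exp ((Real.log t - Real.log s : ℝ) * ξ * Complex.I) := by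
    intro ξ
    rw [Complex.cpow_def_of_ne_zero (by exact_mod_cast hs.ne'),
      Complex.cpow_def_of_ne_zero (by exact_mod_cast ht.ne'), ← Complex.ofReal_log hs.le,
      ← Complex.ofReal_log ht.le, ← Complex.exp_conj, ← Complex.exp_add, Complex.ofReal_exp,
      ← Complex.exp_add]
    congr 1
    simp only [map_mul, map_sub, map_neg, map_div₀, map_one, map_ofNat, Complex.conj_I,
      Complex.conj_ofReal]
    push_cast
    ring
  simp only [hcpow, mul_left_comm _ ((Real.exp _ : ℝ) : ℂ)]
  rw [integral_const_mul, integral_pi_div_cosh_mul_exp, ← Complex.ofReal_mul]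
  congr 1
  have hcosh : (t + s) * Real.exp (-((Real.log s + Real.log t) / 2)) =
      2 * Real.cosh ((Real.log t - Real.log s) / 2) := by
    rw [Real.cosh_eq]
    nth_rewrite 1 [← Real.exp_log ht, ← Real.exp_log hs]
    rw [add_mul, ← Real.exp_add, ← Real.exp_add]
    ring_nf
  have hc := Real.cosh_pos ((Real.log t - Real.log s) / 2)
  field_simp
  linear_combination hcosh

theorem norm_cpow_neg_half_sub {t : ℝ} (ht : 0 < t) (ξ : ℝ) :
    ‖(t : ℂ) ^ ((-(1 / 2) : ℂ) - Complex.I * ξ)‖ = t ^ (-(1 / 2) : ℝ) := by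
  rw [Complex.norm_cpow_eq_rpow_re_of_pos ht]
  simp

theorem IsTestFun.integrableOn_norm_mul_rpow {f : ℝ → ℂ} (hf : IsTestFun f) (r : ℝ) :
    IntegrableOn (fun t : ℝ => ‖f t‖ * t ^ r) (Set.Ioi 0) := by
  obtain ⟨hsm, hcs, hsupp⟩ := hf
  refine Integrable.integrableOn (Continuous.integrable_of_hasCompactSupport ?_ ?_)
  · refine continuous_iff_continuousAt.2 fun t => ?_
    by_cases ht : t ∈ tsupport f
    · exact (hsm.continuous.norm.continuousAt).mul
        (Real.continuousAt_rpow_const _ _ (Or.inl (hsupp ht).ne'))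
    · refine (continuousAt_const (y := (0 : ℝ))).congr ?_
      filter_upwards [notMem_tsupport_iff_eventuallyEq.1 ht] with u hu
      simp [hu]
  · exact hcs.norm.mul_right

/-- Absolute convergence of the triple integral behind the diagonalization. -/
theorem integrable_carleman_mellin {f₁ f₂ : ℝ → ℂ} (hf₁ : IsTestFun f₁) (hf₂ : IsTestFun f₂) :
    Integrable (fun z : ℝ × ℝ × ℝ => ((Real.pi / Real.cosh (Real.pi * z.1) : ℝ) : ℂ) *
        ((starRingEnd ℂ) (f₂ z.2.1 * (z.2.1 : ℂ) ^ ((-(1 / 2) : ℂ) - Complex.I * z.1)) *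
          (f₁ z.2.2 * (z.2.2 : ℂ) ^ ((-(1 / 2) : ℂ) - Complex.I * z.1))))
      (volume.prod ((volume.restrict (Set.Ioi 0)).prod (volume.restrict (Set.Ioi 0)))) := by
  have hm₁ : Measurable f₁ := hf₁.1.continuous.measurable
  have hm₂ : Measurable f₂ := hf₂.1.continuous.measurable
  have hbound := integrable_pi_div_cosh.mul_prod
    ((hf₂.integrableOn_norm_mul_rpow (-(1 / 2))).mul_prod
      (hf₁.integrableOn_norm_mul_rpow (-(1 / 2))))
  refine hbound.mono' ?_ ?_
  · have hconj : Measurable (starRingEnd ℂ) := Complex.continuous_conj.measurable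
    have hcosh : Measurable Real.cosh := Real.continuous_cosh.measurable
    refine Measurable.aestronglyMeasurable ?_
    refine (Complex.measurable_ofReal.comp (by fun_prop)).mul ((hconj.comp ?_).mul ?_)
    · fun_prop
    · fun_prop
  · have hpos : ∀ᵐ p : ℝ × ℝ ∂(volume.restrict (Set.Ioi 0)).prod (volume.restrict (Set.Ioi 0)),
        p ∈ Set.Ioi (0 : ℝ) ×ˢ Set.Ioi (0 : ℝ) := by
      rw [Measure.prod_restrict]
      exact ae_restrict_mem (measurableSet_Ioi.prod measurableSet_Ioi)
    filter_upwards [Measure.quasiMeasurePreserving_snd.ae hpos] with z hz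
    have hc := Real.cosh_pos (Real.pi * z.1)
    rw [norm_mul, norm_mul, RCLike.norm_conj, norm_mul, norm_mul,
      norm_cpow_neg_half_sub hz.1, norm_cpow_neg_half_sub hz.2, Complex.norm_real,
      Real.norm_of_nonneg (by positivity)]

/-- Diagonalization of the Carleman operator: for test functions `f₁, f₂`,
`∫₀^∞∫₀^∞ (t+s)⁻¹ f₁(s) conj(f₂(t)) ds dt = ∫_ℝ (π/cosh(πξ)) (Mf₁)(ξ) conj((Mf₂)(ξ)) dξ`. -/
theorem carleman_diagonalization (f₁ f₂ : ℝ → ℂ)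
    (hf₁ : IsTestFun f₁) (hf₂ : IsTestFun f₂) :
    ∫ t in Set.Ioi (0:ℝ), ∫ s in Set.Ioi (0:ℝ),
        (((t + s)⁻¹ : ℝ) : ℂ) * f₁ s * (starRingEnd ℂ) (f₂ t) =
      ∫ ξ : ℝ, ((Real.pi / Real.cosh (Real.pi * ξ) : ℝ) : ℂ) *
        mellinT f₁ ξ * (starRingEnd ℂ) (mellinT f₂ ξ) := by
  have hint := integrable_carleman_mellin hf₁ hf₂
  have hcoeff : ((Real.sqrt (2 * Real.pi) : ℂ)⁻¹) * (Real.sqrt (2 * Real.pi) : ℂ)⁻¹ =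
      ((2 * Real.pi : ℝ) : ℂ)⁻¹ := by
    rw [← mul_inv, ← Complex.ofReal_mul, Real.mul_self_sqrt (by positivity)]
  have hright : ∀ ξ : ℝ, ((Real.pi / Real.cosh (Real.pi * ξ) : ℝ) : ℂ) *
      mellinT f₁ ξ * (starRingEnd ℂ) (mellinT f₂ ξ) = ((2 * Real.pi : ℝ) : ℂ)⁻¹ *
      ∫ p : ℝ × ℝ, ((Real.pi / Real.cosh (Real.pi * ξ) : ℝ) : ℂ) *
        ((starRingEnd ℂ) (f₂ p.1 * (p.1 : ℂ) ^ ((-(1 / 2) : ℂ) - Complex.I * ξ)) *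
          (f₁ p.2 * (p.2 : ℂ) ^ ((-(1 / 2) : ℂ) - Complex.I * ξ)))
        ∂(volume.restrict (Set.Ioi 0)).prod (volume.restrict (Set.Ioi 0)) := by
    intro ξ
    rw [integral_const_mul, integral_prod_mul
      (fun t : ℝ => (starRingEnd ℂ) (f₂ t * (t : ℂ) ^ ((-(1 / 2) : ℂ) - Complex.I * ξ)))
      (fun s : ℝ => f₁ s * (s : ℂ) ^ ((-(1 / 2) : ℂ) - Complex.I * ξ)), integral_conj,
      mellinT, mellinT, map_mul, map_inv₀, Complex.conj_ofReal, ← hcoeff]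
    ring
  simp only [hright]
  rw [integral_const_mul, integral_integral_swap (μ := volume)
      (ν := (volume.restrict (Set.Ioi (0 : ℝ))).prod (volume.restrict (Set.Ioi (0 : ℝ)))) hint,
    integral_prod _ hint.integral_prod_right, ← integral_const_mul]
  refine setIntegral_congr_fun measurableSet_Ioi fun t ht => ?_
  simp only
  rw [← integral_const_mul]
  refine setIntegral_congr_fun measurableSet_Ioi fun s hs => ?_
  have hfactor : ∀ ξ : ℝ, ((Real.pi / Real.cosh (Real.pi * ξ) : ℝ) : ℂ) *
        ((starRingEnd ℂ) (f₂ t * (t : ℂ) ^ ((-(1 / 2) : ℂ) - Complex.I * ξ)) *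
          (f₁ s * (s : ℂ) ^ ((-(1 / 2) : ℂ) - Complex.I * ξ))) =
      (f₁ s * (starRingEnd ℂ) (f₂ t)) * (((Real.pi / Real.cosh (Real.pi * ξ) : ℝ) : ℂ) *
        ((s : ℂ) ^ ((-(1 / 2) : ℂ) - Complex.I * ξ) *
          (starRingEnd ℂ) ((t : ℂ) ^ ((-(1 / 2) : ℂ) - Complex.I * ξ)))) := by
    intro ξ
    rw [map_mul]
    ring
  simp only [hfactor]
  rw [integral_const_mul, integral_pi_div_cosh_mul_cpow hs ht, Complex.ofReal_mul (2 * Real.pi)]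
  have hπ : ((2 * Real.pi : ℝ) : ℂ) ≠ 0 := by
    exact_mod_cast (by positivity : (2 * Real.pi : ℝ) ≠ 0)
  linear_combination
    -((((t + s)⁻¹ : ℝ) : ℂ) * f₁ s * (starRingEnd ℂ) (f₂ t)) * inv_mul_cancel₀ hπ
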